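/- Let X be a Cantor space, K a dynamical simplex on X, and G the group of all homeomorphisms of X preserving every measure in K. If ν is a Borel probability measure on X with h_*ν = ν for every h ∈ G, then ν ∈ K. -/

import Mathlib

/-!
Call clopen sets `A` and `B` equivalent if `μ A = μ B` for all `μ ∈ K`. A back-and-forth argument,
in which goodness provides the matching piece at every step, shows that equivalent clopen sets are
exchanged by a homeomorphism preserving `K`. Hence an invariant measure `ν` takes the same value on
equivalent clopen sets. By approximate divisibility, clopen sets realise up to `ε` every integral
`∫ f` with `0 ≤ f ≤ 1`, simultaneously for all measures in `K` and for `ν`. If `ν` were not in `K`,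
Hahn-Banach would give such an `f` and a constant `c` with `∫ f ∂ν < c < ∫ f ∂μ` for all `μ ∈ K`.
Clopen sets `E` and `W` realising `c` and `∫ f` then satisfy `μ E < μ W` on `K` but `ν W < ν E`,
which is impossible because goodness puts an equivalent copy of `E` inside `W`.
-/

open MeasureTheory

namespace DynSimplex

variable {X : Type*} [TopologicalSpace X] [MeasurableSpace X] [OpensMeasurableSpace X]

/-- `g` preserves the probability measure `μ`, i.e. `g_*μ = μ`. -/
def Preserves (g : X ≃ₜ X) (μ : ProbabilityMeasure X) : Prop :=
  (μ : Measure X).map g = (μ : Measure X)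

/-- A homeomorphism is minimal if all of its (two-sided) orbits are dense. -/
def IsMinimal (g : X ≃ₜ X) : Prop :=
  ∀ x : X, Dense (Set.range fun n : ℤ => (g.toEquiv ^ n) x)

/-- A set of probability measures is good if for all clopen `A`, `B` with `μ A < μ B` for
all `μ ∈ K`, there is a clopen `C ⊆ B` with `μ C = μ A` for all `μ ∈ K`. -/
def Good (K : Set (ProbabilityMeasure X)) : Prop :=
  ∀ A B : Set X, IsClopen A → IsClopen B → (∀ μ ∈ K, μ A < μ B) →
    ∃ C : Set X, IsClopen C ∧ C ⊆ B ∧ ∀ μ ∈ K, μ C = μ A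

/-- Approximate divisibility of a set of probability measures. -/
def ApproximatelyDivisible (K : Set (ProbabilityMeasure X)) : Prop :=
  ∀ A : Set X, IsClopen A → ∀ n : ℕ, 1 ≤ n → ∀ ε : ℝ, 0 < ε →
    ∃ B : Set X, IsClopen B ∧ B ⊆ A ∧
      ∀ μ ∈ K, (μ A : ℝ) - ε ≤ (n : ℝ) * (μ B : ℝ) ∧ (n : ℝ) * (μ B : ℝ) ≤ (μ A : ℝ)

/-- A probability measure has full support if every nonempty open set has positive measure. -/
def FullSupport (μ : ProbabilityMeasure X) : Prop :=
  ∀ U : Set X, IsOpen U → U.Nonempty → 0 < μ U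

/-- A probability measure is atomless if all singletons are null. -/
def Atomless (μ : ProbabilityMeasure X) : Prop :=
  ∀ x : X, μ {x} = 0

/-- Convexity of a set of probability measures (as a subset of the `ℝ≥0`-module of
finite measures). -/
def ProbConvex (K : Set (ProbabilityMeasure X)) : Prop :=
  Convex NNReal (ProbabilityMeasure.toFiniteMeasure '' K)

/-- The set of extreme points of a set of probability measures. -/
def ProbExtremePoints (K : Set (ProbabilityMeasure X)) : Set (ProbabilityMeasure X) :=
  ProbabilityMeasure.toFiniteMeasure ⁻¹'
    (Set.extremePoints NNReal (ProbabilityMeasure.toFiniteMeasure '' K))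

/-- A dynamical simplex: a nonempty compact convex set of atomless, fully supported
probability measures which is good and approximately divisible. -/
def DynamicalSimplex (K : Set (ProbabilityMeasure X)) : Prop :=
  K.Nonempty ∧ IsCompact K ∧ ProbConvex K ∧
    (∀ μ ∈ K, Atomless μ ∧ FullSupport μ) ∧ Good K ∧ ApproximatelyDivisible K

/-- Membership in the full group of `g`. -/
def InFullGroup (g h : X ≃ₜ X) : Prop :=
  ∀ x : X, ∃ n : ℤ, h x = (g.toEquiv ^ n) x

/-- Membership in the topological full group of `g`: `h` is given piecewise by powers of `g`
on a finite clopen partition of `X`. -/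
def InTopologicalFullGroup (g h : X ≃ₜ X) : Prop :=
  ∃ (k : ℕ) (A : Fin k → Set X) (n : Fin k → ℤ),
    (∀ i, IsClopen (A i)) ∧ (∀ x : X, ∃! i, x ∈ A i) ∧
    ∀ i, ∀ x ∈ A i, h x = (g.toEquiv ^ (n i)) x

/-- `g` preserves every measure in `K` (i.e. `g` belongs to the group `G`). -/
def PreservesAll (K : Set (ProbabilityMeasure X)) (g : X ≃ₜ X) : Prop :=
  ∀ μ ∈ K, Preserves g μ

/-- `g` is `K`-saturated: any two `K`-equivalent clopen sets are mapped one to the other by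
an element of the topological full group of `g`. -/
def KSaturated (K : Set (ProbabilityMeasure X)) (g : X ≃ₜ X) : Prop :=
  ∀ U V : Set X, IsClopen U → IsClopen V → (∀ μ ∈ K, μ U = μ V) →
    ∃ h : X ≃ₜ X, InTopologicalFullGroup g h ∧ h '' U = V

/-- The topology of uniform convergence on the homeomorphism group of a compact space
(the compact-open topology, induced from `C(X, X)`). -/
instance : TopologicalSpace (X ≃ₜ X) :=
  TopologicalSpace.induced (fun h : X ≃ₜ X => (h : C(X, X))) inferInstance

/-- A KR-partition for `K`: a finite family of columns, each column being a finite sequence of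
clopen sets which are all `K`-equivalent, the atoms of all columns forming a partition of `X`. -/
structure KRPartition (X : Type*) [TopologicalSpace X] [MeasurableSpace X]
    (K : Set (ProbabilityMeasure X)) where
  numCols : ℕ
  height : Fin numCols → ℕ
  atom : (i : Fin numCols) → Fin (height i + 1) → Set X
  clopen : ∀ i j, IsClopen (atom i j)
  equivK : ∀ i j j', ∀ μ ∈ K, μ (atom i j) = μ (atom i j')
  partition : ∀ x : X, ∃! p : (i : Fin numCols) × Fin (height i + 1), x ∈ atom p.1 p.2

/-- The base of a KR-partition: the union of the first atoms of the columns. -/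
def KRPartition.base {K : Set (ProbabilityMeasure X)} (T : KRPartition X K) : Set X :=
  ⋃ i, T.atom i 0

/-- The top of a KR-partition: the union of the last atoms of the columns. -/
def KRPartition.top {K : Set (ProbabilityMeasure X)} (T : KRPartition X K) : Set X :=
  ⋃ i, T.atom i (Fin.last _)

/-- `S` refines `T`: the base (resp. top) of `S` is contained in the base (resp. top) of `T`,
and every column of `S` is obtained by cutting and stacking columns of `T`. -/
def KRPartition.Refines {K : Set (ProbabilityMeasure X)} (S T : KRPartition X K) : Prop :=
  S.base ⊆ T.base ∧ S.top ⊆ T.top ∧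
  ∀ c : Fin S.numCols, ∃ (m : ℕ) (idx : Fin (m + 1) → Fin T.numCols)
    (piece : (k : Fin (m + 1)) → Fin (T.height (idx k) + 1) → Set X),
    (∀ k j, piece k j ⊆ T.atom (idx k) j) ∧
    (S.height c + 1 = ∑ k : Fin (m + 1), (T.height (idx k) + 1)) ∧
    ∀ (k : Fin (m + 1)) (j : Fin (T.height (idx k) + 1))
      (hlt : (∑ l ∈ Finset.Iio k, (T.height (idx l) + 1)) + (j : ℕ) < S.height c + 1),
      S.atom c ⟨(∑ l ∈ Finset.Iio k, (T.height (idx l) + 1)) + (j : ℕ), hlt⟩ = piece k j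

/-- A KR-partition is compatible with a clopen set `U` if `U` is a union of its atoms,
equivalently every atom is either contained in `U` or disjoint from it. -/
def KRPartition.Compatible {K : Set (ProbabilityMeasure X)} (S : KRPartition X K)
    (U : Set X) : Prop :=
  ∀ i j, S.atom i j ⊆ U ∨ Disjoint (S.atom i j) U

end DynSimplex

namespace DynSimplex

open Set TopologicalSpace BoundedContinuousFunction unitInterval

/-! ### Separation of a measure from a compact convex set -/

section Separation

variable {X : Type*} [TopologicalSpace X] [MeasurableSpace X]

section

variable [OpensMeasurableSpace X]

/-- Integration against `μ`, as a linear functional on bounded continuous functions. -/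
noncomputable def integralDual (μ : ProbabilityMeasure X) : Module.Dual ℝ (X →ᵇ ℝ) where
  toFun f := ∫ x, f x ∂(μ : Measure X)
  map_add' f g := integral_add (f.integrable _) (g.integrable _)
  map_smul' c _ := integral_const_mul c _

theorem convex_image_integralDual {K : Set (ProbabilityMeasure X)} (hK : ProbConvex K) :
    Convex ℝ (integralDual '' K) := by
  rintro _ ⟨μ₁, h₁, rfl⟩ _ ⟨μ₂, h₂, rfl⟩ a b ha hb hab
  lift a to NNReal using ha
  lift b to NNReal using hb
  obtain ⟨μ, hμ, hcomb⟩ := hK ⟨μ₁, h₁, rfl⟩ ⟨μ₂, h₂, rfl⟩ zero_le zero_le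
    (by exact_mod_cast hab)
  have hmeas : (μ : Measure X) = a • (μ₁ : Measure X) + b • (μ₂ : Measure X) :=
    congrArg (fun m : FiniteMeasure X => (m : Measure X)) hcomb
  refine ⟨μ, hμ, LinearMap.ext fun f => ?_⟩
  change ∫ x, f x ∂(μ : Measure X) = a * ∫ x, f x ∂(μ₁ : Measure X) + b * ∫ x, f x ∂(μ₂ : Measure X)
  rw [hmeas, integral_add_measure ((f.integrable _).smul_measure_nnreal)
    ((f.integrable _).smul_measure_nnreal), integral_smul_nnreal_measure,
    integral_smul_nnreal_measure]
  rfl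

end

variable [HasOuterApproxClosed X] [BorelSpace X]

theorem integralDual_injective :
    Function.Injective (integralDual : ProbabilityMeasure X → Module.Dual ℝ (X →ᵇ ℝ)) :=
  fun _ _ h => ProbabilityMeasure.toMeasure_injective
    (ext_of_forall_integral_eq_of_IsFiniteMeasure fun f => LinearMap.congr_fun h f)

theorem exists_integral_lt_of_notMem {K : Set (ProbabilityMeasure X)} (hK : IsCompact K)
    (hconv : ProbConvex K) {ν : ProbabilityMeasure X} (hν : ν ∉ K) :
    ∃ (f : X →ᵇ ℝ) (u : ℝ), ∫ x, f x ∂(ν : Measure X) < u ∧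
      ∀ μ ∈ K, u < ∫ x, f x ∂(μ : Measure X) := by
  let B : Module.Dual ℝ (X →ᵇ ℝ) →ₗ[ℝ] (X →ᵇ ℝ) →ₗ[ℝ] ℝ := LinearMap.id
  let Φ : ProbabilityMeasure X → WeakBilin B := integralDual
  have hΦ : Continuous Φ := WeakBilin.continuous_of_continuous_eval B fun f =>
    ProbabilityMeasure.continuous_integral_boundedContinuousFunction f
  have : T2Space (WeakBilin B) := (WeakBilin.isEmbedding (B := B) Function.injective_id).t2Space
  have hΦν : Φ ν ∉ Φ '' K := mt integralDual_injective.mem_set_image.1 hν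
  obtain ⟨l, u, hlν, hlK⟩ := geometric_hahn_banach_point_closed (E := WeakBilin B)
    (convex_image_integralDual hconv) (hK.image hΦ).isClosed hΦν
  obtain ⟨f, rfl⟩ := LinearMap.dualEmbedding_surjective B l
  exact ⟨f, u, hlν, fun μ hμ => hlK _ ⟨μ, hμ, rfl⟩⟩

theorem exists_unitInterval_integral_lt_of_notMem {K : Set (ProbabilityMeasure X)}
    (hK : IsCompact K) (hconv : ProbConvex K) {ν : ProbabilityMeasure X} (hν : ν ∉ K) :
    ∃ (f : C(X, I)) (u : ℝ), ∫ x, (f x : ℝ) ∂(ν : Measure X) < u ∧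
      ∀ μ ∈ K, u < ∫ x, (f x : ℝ) ∂(μ : Measure X) := by
  obtain ⟨f, u, hfν, hfK⟩ := exists_integral_lt_of_notMem hK hconv hν
  have hc : 0 < 2 * (‖f‖ + 1) := by positivity
  have hmem : ∀ x, (f x + (‖f‖ + 1)) / (2 * (‖f‖ + 1)) ∈ I := fun x => by
    have := abs_le.1 (f.norm_coe_le_norm x)
    exact ⟨div_nonneg (by linarith) hc.le, (div_le_one hc).2 (by linarith)⟩
  have hrescale : ∀ μ : ProbabilityMeasure X,
      ∫ x, (f x + (‖f‖ + 1)) / (2 * (‖f‖ + 1)) ∂(μ : Measure X) =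
        (∫ x, f x ∂(μ : Measure X) + (‖f‖ + 1)) / (2 * (‖f‖ + 1)) := fun μ => by
    rw [integral_div, integral_add (f.integrable _) (integrable_const _), integral_const,
      probReal_univ, one_smul]
  refine ⟨⟨fun x => ⟨_, hmem x⟩, by fun_prop⟩, (u + (‖f‖ + 1)) / (2 * (‖f‖ + 1)), ?_,
    fun μ hμ => ?_⟩
  · simp only [ContinuousMap.coe_mk, hrescale]
    gcongr
  · simp only [ContinuousMap.coe_mk, hrescale]
    gcongr
    exact hfK μ hμ

end Separation

/-! ### Homeomorphisms between equivalent clopen sets -/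

section Clopen

theorem isLocallyConstant_mem {X : Type*} [TopologicalSpace X] {U : Set X} (hU : IsClopen U) :
    IsLocallyConstant (· ∈ U) := by
  refine IsLocallyConstant.iff_eventually_eq _ |>.2 fun x => ?_
  by_cases hx : x ∈ U
  · filter_upwards [hU.isOpen.mem_nhds hx] with y hy
    exact propext (iff_of_true hy hx)
  · filter_upwards [hU.compl.isOpen.mem_nhds hx] with y hy
    exact propext (iff_of_false hy hx)

theorem isOpen_setOf_mem_apply {X ι : Type*} [TopologicalSpace X] {q : X → ι}
    (hq : IsLocallyConstant q) {V : ι → Set X} (hV : ∀ i, IsOpen (V i)) :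
    IsOpen {x | x ∈ V (q x)} := by
  have : {x | x ∈ V (q x)} = ⋃ i, q ⁻¹' {i} ∩ V i := by
    ext x
    simp
  rw [this]
  exact isOpen_iUnion fun i => (hq {i}).inter (hV i)

theorem isClopen_setOf_mem_apply {X ι : Type*} [TopologicalSpace X] {q : X → ι}
    (hq : IsLocallyConstant q) {V : ι → Set X} (hV : ∀ i, IsClopen (V i)) :
    IsClopen {x | x ∈ V (q x)} :=
  ⟨⟨isOpen_setOf_mem_apply hq (V := fun i => (V i)ᶜ) fun i => (hV i).compl.isOpen⟩,
    isOpen_setOf_mem_apply hq fun i => (hV i).isOpen⟩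

theorem preimage_singleton_inter_setOf_mem_apply {X ι : Type*} {q : X → ι} {V : ι → Set X} (i : ι)
    (hV : V i ⊆ q ⁻¹' {i}) : q ⁻¹' {i} ∩ {x | x ∈ V (q x)} = V i := by
  ext x
  constructor
  · rintro ⟨rfl, hx⟩
    exact hx
  · intro hx
    obtain rfl : q x = i := hV hx
    exact ⟨rfl, hx⟩

theorem apply_inter_add_apply_sdiff {X : Type*} [TopologicalSpace X] [MeasurableSpace X]
    [OpensMeasurableSpace X] (μ : ProbabilityMeasure X) (A : Set X) {U : Set X}
    (hU : IsClopen U) : μ (A ∩ U) + μ (A \ U) = μ A := by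
  have hreal := measureReal_inter_add_sdiff (μ := (μ : Measure X)) (s := A) hU.isOpen.measurableSet
  simp only [ProbabilityMeasure.measureReal_eq_coe_coeFn] at hreal
  exact_mod_cast hreal

theorem measure_ext_of_isClopen {X : Type*} [TopologicalSpace X] [CompactSpace X] [T2Space X]
    [TotallyDisconnectedSpace X] [SecondCountableTopology X] [MeasurableSpace X] [BorelSpace X]
    {μ ν : Measure X} [IsFiniteMeasure μ] (h : ∀ U, IsClopen U → μ U = ν U) : μ = ν := by
  refine ext_of_generate_finite {s : Set X | IsClopen s} ?_ ?_ h (h _ isClopen_univ)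
  · rw [BorelSpace.measurable_eq (α := X)]
    exact isTopologicalBasis_isClopen.borel_eq_generateFrom
  · exact fun s hs t ht _ => hs.inter ht

theorem eq_of_forall_isClopen_mem_iff {X : Type*} [TopologicalSpace X] [CompactSpace X] [T2Space X]
    [TotallyDisconnectedSpace X] {x y : X} (h : ∀ U, IsClopen U → (x ∈ U ↔ y ∈ U)) : x = y := by
  by_contra hne
  obtain ⟨U, hU, hx, hy⟩ := exists_isClopen_of_totally_separated hne
  exact hy ((h U hU).1 hx)

theorem exists_homeomorph_of_rel {X Y : Type*} [TopologicalSpace X] [CompactSpace X] [T2Space X]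
    [TotallyDisconnectedSpace X] [TopologicalSpace Y] [CompactSpace Y] [T2Space Y]
    [TotallyDisconnectedSpace Y] {R : X → Y → Prop} (hleft : ∀ x, ∃ y, R x y)
    (hright : ∀ y, ∃ x, R x y)
    (hU : ∀ U : Set X, IsClopen U → ∃ V, IsClopen V ∧ ∀ x y, R x y → (x ∈ U ↔ y ∈ V))
    (hV : ∀ V : Set Y, IsClopen V → ∃ U, IsClopen U ∧ ∀ x y, R x y → (x ∈ U ↔ y ∈ V)) :
    ∃ g : X ≃ₜ Y, ∀ x, R x (g x) := by
  choose f hf using hleft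
  choose f' hf' using hright
  refine ⟨⟨⟨f, f', fun x => ?_, fun y => ?_⟩, ?_, ?_⟩, hf⟩
  · refine eq_of_forall_isClopen_mem_iff fun U hUc => ?_
    obtain ⟨V, -, hUV⟩ := hU U hUc
    rw [hUV _ _ (hf' (f x)), hUV _ _ (hf x)]
  · refine eq_of_forall_isClopen_mem_iff fun V hVc => ?_
    obtain ⟨U, -, hUV⟩ := hV V hVc
    rw [← hUV _ _ (hf (f' y)), hUV _ _ (hf' y)]
  · refine isTopologicalBasis_isClopen.continuous_iff.2 fun V hVc => ?_
    obtain ⟨U, hUc, hUV⟩ := hV V hVc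
    exact (Set.ext fun x => (hUV _ _ (hf x)).symm : f ⁻¹' V = U) ▸ hUc.isOpen
  · refine isTopologicalBasis_isClopen.continuous_iff.2 fun U hUc => ?_
    obtain ⟨V, hVc, hUV⟩ := hU U hUc
    exact (Set.ext fun y => hUV _ _ (hf' y) : f' ⁻¹' U = V) ▸ hVc.isOpen

end Clopen

section Matching

variable {X : Type*} [TopologicalSpace X] [MeasurableSpace X]

/-- Two clopen partitions of `X`, matched so that corresponding pieces have the same measure for
every `μ ∈ K`. They are encoded by locally constant labellings, corresponding pieces being the
fibres over the same label. -/
structure Matching (K : Set (ProbabilityMeasure X)) where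
  Label : Type
  countable : Countable Label
  left : X → Label
  right : X → Label
  isLocallyConstant_left : IsLocallyConstant left
  isLocallyConstant_right : IsLocallyConstant right
  measure_fiber_eq : ∀ i, ∀ μ ∈ K, μ (left ⁻¹' {i}) = μ (right ⁻¹' {i})

namespace Matching

variable {K : Set (ProbabilityMeasure X)}

/-- The matching with the single piece `X` on both sides. -/
def indiscrete (K : Set (ProbabilityMeasure X)) : Matching K where
  Label := Unit
  countable := inferInstance
  left _ := ()
  right _ := ()
  isLocallyConstant_left := .const ()
  isLocallyConstant_right := .const ()
  measure_fiber_eq _ _ _ := rfl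

/-- The matching with the two sides exchanged. -/
def symm (M : Matching K) : Matching K where
  Label := M.Label
  countable := M.countable
  left := M.right
  right := M.left
  isLocallyConstant_left := M.isLocallyConstant_right
  isLocallyConstant_right := M.isLocallyConstant_left
  measure_fiber_eq i μ hμ := (M.measure_fiber_eq i μ hμ).symm

/-- Every pair of matched pieces of `M'` lies inside a pair of matched pieces of `M`. -/
def Refines (M' M : Matching K) : Prop :=
  ∃ π : M'.Label → M.Label, (∀ x, π (M'.left x) = M.left x) ∧ ∀ x, π (M'.right x) = M.right x

/-- `U` and `V` are corresponding unions of pieces of the two partitions. -/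
def Matches (M : Matching K) (U V : Set X) : Prop :=
  ∃ S : Set M.Label, M.left ⁻¹' S = U ∧ M.right ⁻¹' S = V

variable {M M' M'' : Matching K} {U V : Set X}

theorem Refines.symm (h : M'.Refines M) : M'.symm.Refines M.symm :=
  let ⟨π, hl, hr⟩ := h
  ⟨π, hr, hl⟩

theorem Refines.trans (h : M''.Refines M') (h' : M'.Refines M) : M''.Refines M :=
  let ⟨π, hl, hr⟩ := h
  let ⟨π', hl', hr'⟩ := h'
  ⟨π' ∘ π, fun x => by rw [Function.comp_apply, hl, hl'],
    fun x => by rw [Function.comp_apply, hr, hr']⟩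

theorem Refines.left_eq_right (h : M'.Refines M) {x y : X} (hxy : M'.left x = M'.right y) :
    M.left x = M.right y := by
  obtain ⟨π, hl, hr⟩ := h
  rw [← hl, ← hr, hxy]

theorem Matches.symm (h : M.Matches U V) : M.symm.Matches V U :=
  let ⟨S, hU, hV⟩ := h
  ⟨S, hV, hU⟩

theorem Matches.of_refines (h : M.Matches U V) (hM : M'.Refines M) : M'.Matches U V := by
  obtain ⟨S, rfl, rfl⟩ := h
  obtain ⟨π, hl, hr⟩ := hM
  exact ⟨π ⁻¹' S, by ext x; simp [hl], by ext x; simp [hr]⟩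

theorem Matches.mem_iff (h : M.Matches U V) {x y : X} (hxy : M.left x = M.right y) :
    x ∈ U ↔ y ∈ V := by
  obtain ⟨S, rfl, rfl⟩ := h
  rw [mem_preimage, hxy, mem_preimage]

theorem Matches.isClopen_left (h : M.Matches U V) : IsClopen U := by
  obtain ⟨S, rfl, -⟩ := h
  exact ⟨⟨M.isLocallyConstant_left Sᶜ⟩, M.isLocallyConstant_left S⟩

theorem Matches.isClopen_right (h : M.Matches U V) : IsClopen V :=
  h.symm.isClopen_left

theorem exists_left_eq_right (hne : K.Nonempty) (hfull : ∀ μ ∈ K, FullSupport μ) (M : Matching K)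
    (x : X) : ∃ y, M.left x = M.right y := by
  obtain ⟨μ, hμ⟩ := hne
  have hpos : 0 < μ (M.left ⁻¹' {M.left x}) :=
    hfull μ hμ _ (M.isLocallyConstant_left _) ⟨x, rfl⟩
  rw [M.measure_fiber_eq _ μ hμ] at hpos
  have hne : (M.right ⁻¹' {M.left x}).Nonempty := by
    by_contra hempty
    rw [not_nonempty_iff_eq_empty.1 hempty, ProbabilityMeasure.coeFn_empty] at hpos
    exact hpos.false
  exact hne.imp fun _ hy => hy.symm

/-- Nested nonempty compact pieces have a common point. -/
theorem exists_forall_left_eq_right [CompactSpace X] (hne : K.Nonempty)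
    (hfull : ∀ μ ∈ K, FullSupport μ) {M : ℕ → Matching K}
    (hM : ∀ n, (M (n + 1)).Refines (M n)) (x : X) : ∃ y, ∀ n, (M n).left x = (M n).right y := by
  have hclosed : ∀ n, IsClosed {y | (M n).left x = (M n).right y} := fun n => by
    simpa only [eq_comm] using! (M n).isLocallyConstant_right.isClosed_fiber ((M n).left x)
  obtain ⟨y, hy⟩ := IsCompact.nonempty_iInter_of_sequence_nonempty_isCompact_isClosed
    (fun n => {y | (M n).left x = (M n).right y}) (fun n y hy => (hM n).left_eq_right hy)
    (fun n => (M n).exists_left_eq_right hne hfull x) (hclosed 0).isCompact hclosed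
  exact ⟨y, mem_iInter.1 hy⟩

variable [OpensMeasurableSpace X]

theorem Matches.measure_eq (h : M.Matches U V) {μ : ProbabilityMeasure X} (hμ : μ ∈ K) :
    (μ : Measure X) U = (μ : Measure X) V := by
  obtain ⟨S, rfl, rfl⟩ := h
  have := M.countable
  let : MeasurableSpace M.Label := ⊤
  have hl : Measurable M.left := fun T _ => (M.isLocallyConstant_left T).measurableSet
  have hr : Measurable M.right := fun T _ => (M.isLocallyConstant_right T).measurableSet
  have hmap : (μ : Measure X).map M.left = (μ : Measure X).map M.right := by
    refine Measure.ext_of_singleton fun i => ?_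
    rw [Measure.map_apply hl (measurableSet_singleton i),
      Measure.map_apply hr (measurableSet_singleton i),
      ← ProbabilityMeasure.ennreal_coeFn_eq_coeFn_toMeasure,
      ← ProbabilityMeasure.ennreal_coeFn_eq_coeFn_toMeasure, M.measure_fiber_eq i μ hμ]
  rw [← Measure.map_apply hl .of_discrete, hmap, Measure.map_apply hr .of_discrete]

/-- Cutting the pieces of the left partition along `U` and those of the right one along `V`. -/
def cut (M : Matching K) (hU : IsClopen U) (hV : IsClopen V)
    (hUV : ∀ i, ∀ μ ∈ K, μ (M.left ⁻¹' {i} ∩ U) = μ (M.right ⁻¹' {i} ∩ V)) : Matching K where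
  Label := M.Label × Prop
  countable := have := M.countable; inferInstance
  left x := (M.left x, x ∈ U)
  right y := (M.right y, y ∈ V)
  isLocallyConstant_left := M.isLocallyConstant_left.prodMk (isLocallyConstant_mem hU)
  isLocallyConstant_right := M.isLocallyConstant_right.prodMk (isLocallyConstant_mem hV)
  measure_fiber_eq := by
    rintro ⟨i, P⟩ μ hμ
    have hin : ∀ (q : X → M.Label) W, (fun x => (q x, x ∈ W)) ⁻¹' {(i, True)} = q ⁻¹' {i} ∩ W :=
      fun q W => by ext x; simp
    have hout : ∀ (q : X → M.Label) W, (fun x => (q x, x ∈ W)) ⁻¹' {(i, False)} = q ⁻¹' {i} \ W :=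
      fun q W => by ext x; simp
    by_cases hP : P
    · rw [eq_true hP, hin, hin, hUV i μ hμ]
    · have h := M.measure_fiber_eq i μ hμ
      rw [← apply_inter_add_apply_sdiff μ (M.left ⁻¹' {i}) hU,
        ← apply_inter_add_apply_sdiff μ (M.right ⁻¹' {i}) hV, hUV i μ hμ] at h
      rw [eq_false hP, hout, hout]
      exact add_left_cancel h

theorem cut_refines (M : Matching K) (hU : IsClopen U) (hV : IsClopen V)
    (hUV : ∀ i, ∀ μ ∈ K, μ (M.left ⁻¹' {i} ∩ U) = μ (M.right ⁻¹' {i} ∩ V)) :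
    (M.cut hU hV hUV).Refines M :=
  ⟨Prod.fst, fun _ => rfl, fun _ => rfl⟩

theorem cut_matches (M : Matching K) (hU : IsClopen U) (hV : IsClopen V)
    (hUV : ∀ i, ∀ μ ∈ K, μ (M.left ⁻¹' {i} ∩ U) = μ (M.right ⁻¹' {i} ∩ V)) :
    (M.cut hU hV hUV).Matches U V :=
  ⟨{p | p.2}, rfl, rfl⟩

theorem exists_matches_of_measure_eq (hU : IsClopen U) (hV : IsClopen V)
    (hUV : ∀ μ ∈ K, μ U = μ V) : ∃ M : Matching K, M.Matches U V := by
  refine ⟨_, (indiscrete K).cut_matches hU hV fun i μ hμ => ?_⟩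
  have hleft : (indiscrete K).left ⁻¹' {i} = univ := eq_univ_of_forall fun _ => rfl
  have hright : (indiscrete K).right ⁻¹' {i} = univ := eq_univ_of_forall fun _ => rfl
  rw [hleft, hright, univ_inter, univ_inter, hUV μ hμ]

/-- Goodness applies because, by full support, a proper clopen part of a piece is strictly smaller
than the piece for every `μ ∈ K`. -/
theorem exists_subset_right_fiber (hgood : Good K) (hfull : ∀ μ ∈ K, FullSupport μ)
    (M : Matching K) (hU : IsClopen U) (i : M.Label) :
    ∃ V, IsClopen V ∧ V ⊆ M.right ⁻¹' {i} ∧ ∀ μ ∈ K, μ V = μ (M.left ⁻¹' {i} ∩ U) := by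
  have hl : IsClopen (M.left ⁻¹' {i}) := M.isLocallyConstant_left.isClopen_fiber i
  have hr : IsClopen (M.right ⁻¹' {i}) := M.isLocallyConstant_right.isClopen_fiber i
  by_cases hne : (M.left ⁻¹' {i} \ U).Nonempty
  · refine hgood _ _ (hl.inter hU) hr fun μ hμ => ?_
    rw [← M.measure_fiber_eq i μ hμ, ← apply_inter_add_apply_sdiff μ (M.left ⁻¹' {i}) hU]
    exact lt_add_of_pos_right _ (hfull μ hμ _ (hl.diff hU).isOpen hne)
  · rw [not_nonempty_iff_eq_empty, sdiff_eq_empty] at hne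
    exact ⟨_, hr, subset_rfl, fun μ hμ => by rw [inter_eq_left.2 hne, M.measure_fiber_eq i μ hμ]⟩

theorem exists_refines_matches_left (hgood : Good K) (hfull : ∀ μ ∈ K, FullSupport μ)
    (M : Matching K) (hU : IsClopen U) : ∃ M' : Matching K, M'.Refines M ∧ ∃ V, M'.Matches U V := by
  choose V hV hVsub hVμ using M.exists_subset_right_fiber hgood hfull hU
  have hcut : ∀ i, ∀ μ ∈ K,
      μ (M.left ⁻¹' {i} ∩ U) = μ (M.right ⁻¹' {i} ∩ {y | y ∈ V (M.right y)}) := fun i μ hμ => by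
    rw [preimage_singleton_inter_setOf_mem_apply i (hVsub i), hVμ i μ hμ]
  have hVclopen := isClopen_setOf_mem_apply M.isLocallyConstant_right hV
  exact ⟨_, M.cut_refines hU hVclopen hcut, _, M.cut_matches hU hVclopen hcut⟩

theorem exists_refines_matches (hgood : Good K) (hfull : ∀ μ ∈ K, FullSupport μ)
    (M : Matching K) (hU : IsClopen U) :
    ∃ M' : Matching K, M'.Refines M ∧ (∃ V, M'.Matches U V) ∧ ∃ V, M'.Matches V U := by
  obtain ⟨M₁, h₁, V, hV⟩ := M.exists_refines_matches_left hgood hfull hU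
  obtain ⟨M₂, h₂, W, hW⟩ := M₁.symm.exists_refines_matches_left hgood hfull hU
  exact ⟨M₂.symm, h₂.symm.trans h₁, ⟨V, hV.of_refines h₂.symm⟩, W, hW.symm⟩

theorem exists_seq_refines_matches [CompactSpace X] [T2Space X]
    [TotallyDisconnectedSpace X] [SecondCountableTopology X] (hgood : Good K)
    (hfull : ∀ μ ∈ K, FullSupport μ) (M₀ : Matching K) :
    ∃ M : ℕ → Matching K, M 0 = M₀ ∧ (∀ n, (M (n + 1)).Refines (M n)) ∧
      ∀ U, IsClopen U → ∃ n, (∃ V, (M n).Matches U V) ∧ ∃ V, (M n).Matches V U := by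
  have : Countable (Clopens X) := Clopens.countable_iff_secondCountable.2 inferInstance
  obtain ⟨U, hU⟩ := exists_surjective_nat (Clopens X)
  choose next hrefines hmatches using
    fun (n : ℕ) (M : Matching K) => M.exists_refines_matches hgood hfull (U n).isClopen
  let M : ℕ → Matching K := fun n => Nat.rec M₀ next n
  refine ⟨M, rfl, fun n => hrefines n (M n), fun W hW => ?_⟩
  obtain ⟨n, hn⟩ := hU ⟨W, hW⟩
  have := hmatches n (M n)
  rw [hn] at this
  exact ⟨n + 1, this⟩

end Matching

theorem exists_homeomorph_preservesAll_of_measure_eq [CompactSpace X] [T2Space X]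
    [TotallyDisconnectedSpace X] [SecondCountableTopology X] [BorelSpace X]
    {K : Set (ProbabilityMeasure X)} (hne : K.Nonempty) (hgood : Good K)
    (hfull : ∀ μ ∈ K, FullSupport μ) {A B : Set X} (hA : IsClopen A) (hB : IsClopen B)
    (hAB : ∀ μ ∈ K, μ A = μ B) : ∃ g : X ≃ₜ X, PreservesAll K g ∧ g ⁻¹' B = A := by
  obtain ⟨M₀, hM₀⟩ := Matching.exists_matches_of_measure_eq hA hB hAB
  obtain ⟨M, rfl, hrefines, hmatches⟩ := M₀.exists_seq_refines_matches hgood hfull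
  obtain ⟨g, hg⟩ := exists_homeomorph_of_rel (R := fun x y => ∀ n, (M n).left x = (M n).right y)
    (Matching.exists_forall_left_eq_right hne hfull hrefines)
    (fun y => (Matching.exists_forall_left_eq_right hne hfull (M := fun n => (M n).symm)
      (fun n => (hrefines n).symm) y).imp fun _ h n => (h n).symm)
    (fun U hU =>
      let ⟨n, ⟨V, hV⟩, _⟩ := hmatches U hU
      ⟨V, hV.isClopen_right, fun _ _ h => hV.mem_iff (h n)⟩)
    (fun V hV =>
      let ⟨n, _, ⟨U, hU⟩⟩ := hmatches V hV
      ⟨U, hU.isClopen_left, fun _ _ h => hU.mem_iff (h n)⟩)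
  have hpre : ∀ {n U V}, (M n).Matches U V → g ⁻¹' V = U := fun h =>
    Set.ext fun x => (h.mem_iff (hg x _)).symm
  refine ⟨g, fun μ hμ => measure_ext_of_isClopen fun V hV => ?_, hpre hM₀⟩
  obtain ⟨n, -, U, hU⟩ := hmatches V hV
  rw [Measure.map_apply g.continuous.measurable hV.isOpen.measurableSet, hpre hU, hU.measure_eq hμ]

end Matching

/-! ### Measures constant on equivalence classes -/

section EquivHull

variable {X : Type*} [TopologicalSpace X] [MeasurableSpace X]

/-- The probability measures which cannot distinguish two clopen sets unless some measure of `K`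
does. -/
def equivHull (K : Set (ProbabilityMeasure X)) : Set (ProbabilityMeasure X) :=
  {ν | ∀ A B, IsClopen A → IsClopen B → (∀ μ ∈ K, μ A = μ B) → ν A = ν B}

variable {K : Set (ProbabilityMeasure X)}

theorem subset_equivHull (K : Set (ProbabilityMeasure X)) : K ⊆ equivHull K :=
  fun μ hμ _ _ _ _ h => h μ hμ

theorem apply_le_apply_of_mem_equivHull (hgood : Good K) {A B : Set X} (hA : IsClopen A)
    (hB : IsClopen B) (h : ∀ μ ∈ K, μ A < μ B) {ν : ProbabilityMeasure X} (hν : ν ∈ equivHull K) :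
    ν A ≤ ν B := by
  obtain ⟨C, hC, hCB, hCA⟩ := hgood A B hA hB h
  exact hν C A hC hA hCA ▸ ν.apply_mono hCB

variable [OpensMeasurableSpace X]

theorem exists_isClopen_apply_eq_mul (hgood : Good K) {U B : Set X} (hU : IsClopen U)
    (hB : IsClopen B) (n : ℕ) (h : ∀ μ ∈ K, n * μ B < μ U) :
    ∃ D ⊆ U, IsClopen D ∧ ∀ ν ∈ equivHull K, ν D = n * ν B := by
  induction n with
  | zero => exact ⟨∅, empty_subset _, isClopen_empty, fun ν _ => by simp⟩
  | succ n ih =>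
    simp only [Nat.cast_add, Nat.cast_one, add_mul, one_mul] at h ⊢
    obtain ⟨D, hDU, hD, hDν⟩ := ih fun μ hμ => le_self_add.trans_lt (h μ hμ)
    have hroom : ∀ μ ∈ K, μ B < μ (U \ D) := fun μ hμ => by
      have hadd := apply_inter_add_apply_sdiff μ U hD
      rw [inter_eq_right.2 hDU, hDν μ (subset_equivHull K hμ)] at hadd
      exact lt_of_add_lt_add_left (hadd ▸ h μ hμ)
    obtain ⟨C, hC, hCU, hCB⟩ := hgood B (U \ D) hB (hU.diff hD) hroom
    refine ⟨D ∪ C, union_subset hDU (hCU.trans sdiff_subset), hD.union hC, fun ν hν => ?_⟩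
    have hdisj : Disjoint C D := disjoint_sdiff_left.mono_left hCU
    rw [← apply_inter_add_apply_sdiff ν (D ∪ C) hD, union_inter_cancel_left, union_sdiff_left,
      hdisj.sdiff_eq_left, hDν ν hν, hν C B hC hB hCB]

theorem mul_apply_le_one_of_mem_equivHull (hgood : Good K) {A : Set X} (hA : IsClopen A) (n : ℕ)
    (h : ∀ μ ∈ K, n * μ A < 1) {ν : ProbabilityMeasure X} (hν : ν ∈ equivHull K) :
    n * ν A ≤ 1 := by
  obtain ⟨D, -, -, hDν⟩ := exists_isClopen_apply_eq_mul hgood isClopen_univ hA n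
    (by simpa only [ProbabilityMeasure.coeFn_univ] using h)
  exact hDν ν hν ▸ ν.apply_le_one D

/-- Divisibility makes the part of `U` left over by `2 * n` copies of `B` small only on `K`. But
then `n` copies of that part fit in `X`, and this bounds it on all of `equivHull K`. -/
theorem exists_isClopen_mul_approx (hgood : Good K) (hdiv : ApproximatelyDivisible K)
    (hfull : ∀ μ ∈ K, FullSupport μ) {U : Set X} (hU : IsClopen U) (hne : U.Nonempty) (n : ℕ) :
    ∃ B, IsClopen B ∧ (∀ μ ∈ K, (2 * n : ℕ) * μ B < μ U) ∧ ∀ ν ∈ equivHull K,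
      (2 * n : ℝ) * ν B ≤ ν U ∧ n * ((ν U : ℝ) - 2 * n * ν B) ≤ 1 := by
  have hpos : (0 : ℝ) < 2 * n + 1 := by positivity
  obtain ⟨B, hB, -, hBμ⟩ := hdiv U hU (2 * n + 1) (by lia) (1 / (2 * n + 1)) (by positivity)
  push_cast at hBμ
  have hroom : ∀ μ ∈ K, (2 * n : ℕ) * μ B < μ U := fun μ hμ => by
    rw [← NNReal.coe_lt_coe]
    push_cast
    have hUpos : (0 : ℝ) < μ U := by exact_mod_cast hfull μ hμ U hU.isOpen hne
    rcases (μ B).coe_nonneg.eq_or_lt with hzero | hBpos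
    · rwa [← hzero, mul_zero]
    · linarith [(hBμ μ hμ).2]
  obtain ⟨D, hDU, hD, hDν⟩ := exists_isClopen_apply_eq_mul hgood hU hB _ hroom
  have hrest : ∀ ν ∈ equivHull K, (ν (U \ D) : ℝ) = ν U - 2 * n * ν B := fun ν hν => by
    have hadd := apply_inter_add_apply_sdiff ν U hD
    rw [inter_eq_right.2 hDU, hDν ν hν] at hadd
    rw [← hadd]
    push_cast
    ring
  have hsmall : ∀ μ ∈ K, n * μ (U \ D) < 1 := fun μ hμ => by
    rw [← NNReal.coe_lt_coe]
    push_cast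
    rw [hrest μ (subset_equivHull K hμ)]
    have hUle : (μ U : ℝ) ≤ 1 := by exact_mod_cast μ.apply_le_one U
    have hBle : (μ B : ℝ) ≤ 1 / (2 * n + 1) := by
      rw [le_div_iff₀ hpos]
      linarith [(hBμ μ hμ).2]
    calc (n : ℝ) * (μ U - 2 * n * μ B) ≤ n * (1 / (2 * n + 1) + 1 / (2 * n + 1)) := by
          gcongr
          linarith [(hBμ μ hμ).1]
      _ < 1 := by
          rw [← add_div, mul_div_assoc', div_lt_one hpos]
          linarith
  refine ⟨B, hB, hroom, fun ν hν => ⟨?_, ?_⟩⟩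
  · linarith [hrest ν hν, (ν (U \ D)).coe_nonneg]
  · rw [← hrest ν hν]
    exact_mod_cast mul_apply_le_one_of_mem_equivHull hgood (hU.diff hD) n hsmall hν

theorem abs_natFloor_mul_sub_mul_le {n : ℕ} (hn : 0 < n) {c b u : ℝ} (hc : c ∈ I) (hb : 0 ≤ b)
    (hbu : 2 * n * b ≤ u) (hu : u ≤ 1) (hrest : n * (u - 2 * n * b) ≤ 1) :
    |⌊c * (2 * n)⌋₊ * b - c * u| ≤ 2 / n := by
  have hn0 : (0 : ℝ) < n := Nat.cast_pos.2 hn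
  have hfloor : (⌊c * (2 * n)⌋₊ : ℝ) ≤ c * (2 * n) :=
    Nat.floor_le (mul_nonneg hc.1 (by positivity))
  have hb' : n * b ≤ 1 := by linarith [mul_nonneg hn0.le hb]
  have hsplit : ⌊c * (2 * n)⌋₊ * b - c * u =
      -(c * (u - 2 * n * b) + (c * (2 * n) - ⌊c * (2 * n)⌋₊) * b) := by
    ring
  rw [hsplit, abs_neg, abs_of_nonneg (add_nonneg (mul_nonneg hc.1 (sub_nonneg.2 hbu))
    (mul_nonneg (sub_nonneg.2 hfloor) hb))]
  calc c * (u - 2 * n * b) + (c * (2 * n) - ⌊c * (2 * n)⌋₊) * b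
      ≤ (u - 2 * n * b) + b := add_le_add (mul_le_of_le_one_left (sub_nonneg.2 hbu) hc.2)
        (mul_le_of_le_one_left hb (sub_left_le_of_le_add (Nat.lt_floor_add_one _).le))
    _ ≤ 1 / n + 1 / n := add_le_add ((le_div_iff₀' hn0).2 hrest) ((le_div_iff₀' hn0).2 hb')
    _ = 2 / n := by rw [← add_div, one_add_one_eq_two]

theorem exists_isClopen_apply_approx_mul (hgood : Good K) (hdiv : ApproximatelyDivisible K)
    (hfull : ∀ μ ∈ K, FullSupport μ) {U : Set X} (hU : IsClopen U) {c : ℝ} (hc : c ∈ I) {ε : ℝ}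
    (hε : 0 < ε) :
    ∃ W ⊆ U, IsClopen W ∧ ∀ ν ∈ equivHull K, |(ν W : ℝ) - c * ν U| ≤ ε := by
  rcases U.eq_empty_or_nonempty with rfl | hne
  · exact ⟨∅, subset_rfl, isClopen_empty, fun ν _ => by simp [hε.le]⟩
  obtain ⟨n, hn⟩ := exists_nat_gt (2 / ε)
  have hn0 : (0 : ℝ) < n := lt_trans (by positivity) hn
  obtain ⟨B, hB, hroom, hBν⟩ := exists_isClopen_mul_approx hgood hdiv hfull hU hne n
  have hfloor : ⌊c * (2 * n)⌋₊ ≤ 2 * n :=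
    Nat.floor_le_of_le (by simpa using mul_le_of_le_one_left (by positivity) hc.2)
  obtain ⟨W, hWU, hW, hWν⟩ := exists_isClopen_apply_eq_mul hgood hU hB ⌊c * (2 * n)⌋₊ fun μ hμ =>
    (hroom μ hμ).trans_le' (by gcongr)
  refine ⟨W, hWU, hW, fun ν hν => ?_⟩
  obtain ⟨hle, hrest⟩ := hBν ν hν
  have hUle : (ν U : ℝ) ≤ 1 := by exact_mod_cast ν.apply_le_one U
  rw [hWν ν hν, NNReal.coe_mul, NNReal.coe_natCast]
  exact (abs_natFloor_mul_sub_mul_le (Nat.cast_pos.1 hn0) hc (ν B).coe_nonneg hle hUle hrest).trans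
    ((div_lt_comm₀ hε hn0).1 hn).le

theorem exists_isClopen_apply_approx_sum (hgood : Good K) (hdiv : ApproximatelyDivisible K)
    (hfull : ∀ μ ∈ K, FullSupport μ) {ι : Type*} [Fintype ι] {g : X → ι} (hg : IsLocallyConstant g)
    (c : ι → I) {ε : ℝ} (hε : 0 < ε) :
    ∃ W, IsClopen W ∧ ∀ ν ∈ equivHull K, |(ν W : ℝ) - ∑ i, c i * (ν (g ⁻¹' {i}) : ℝ)| ≤ ε := by
  choose W hWg hW hWν using fun i => exists_isClopen_apply_approx_mul hgood hdiv hfull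
    (hg.isClopen_fiber i) (c i).2 (ε := ε / (Fintype.card ι + 1)) (by positivity)
  have hdisj : Pairwise (Function.onFun Disjoint W) := fun i j hij =>
    disjoint_left.2 fun x hi hj => hij ((hWg i hi).symm.trans (hWg j hj))
  refine ⟨⋃ i, W i, isClopen_iUnion_of_finite hW, fun ν hν => ?_⟩
  have hsum : (ν (⋃ i, W i) : ℝ) = ∑ i, (ν (W i) : ℝ) := by
    simp only [← ProbabilityMeasure.measureReal_eq_coe_coeFn]
    exact measureReal_iUnion_fintype hdisj fun i => (hW i).isOpen.measurableSet
  calc |(ν (⋃ i, W i) : ℝ) - ∑ i, c i * (ν (g ⁻¹' {i}) : ℝ)|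
      = |∑ i, ((ν (W i) : ℝ) - c i * ν (g ⁻¹' {i}))| := by rw [hsum, Finset.sum_sub_distrib]
    _ ≤ ∑ i, |(ν (W i) : ℝ) - c i * ν (g ⁻¹' {i})| := Finset.abs_sum_le_sum_abs _ _
    _ ≤ ∑ _i : ι, ε / (Fintype.card ι + 1) := Finset.sum_le_sum fun i _ => hWν i ν hν
    _ ≤ ε := by
      rw [Finset.sum_const, Finset.card_univ, nsmul_eq_mul, mul_div_assoc',
        div_le_iff₀ (by positivity)]
      linarith

theorem integral_comp_eq_sum (ν : ProbabilityMeasure X) {ι : Type*} [Fintype ι] {g : X → ι}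
    (hg : IsLocallyConstant g) (c : ι → ℝ) :
    ∫ x, c (g x) ∂(ν : Measure X) = ∑ i, c i * (ν (g ⁻¹' {i}) : ℝ) := by
  let : MeasurableSpace ι := ⊤
  have hgm : Measurable g := fun S _ => (hg S).measurableSet
  rw [← integral_map (f := c) hgm.aemeasurable (Measurable.of_discrete).aestronglyMeasurable,
    integral_fintype .of_finite]
  refine Finset.sum_congr rfl fun i _ => ?_
  rw [map_measureReal_apply hgm (measurableSet_singleton i),
    ProbabilityMeasure.measureReal_eq_coe_coeFn, smul_eq_mul, mul_comm]

theorem exists_isClopen_apply_approx_integral [CompactSpace X] [T2Space X]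
    [TotallyDisconnectedSpace X] (hgood : Good K) (hdiv : ApproximatelyDivisible K)
    (hfull : ∀ μ ∈ K, FullSupport μ) (f : C(X, I)) {ε : ℝ} (hε : 0 < ε) :
    ∃ W, IsClopen W ∧ ∀ ν ∈ equivHull K, |(ν W : ℝ) - ∫ x, (f x : ℝ) ∂(ν : Measure X)| ≤ ε := by
  have hS : {p : I × I | dist p.1 p.2 < ε / 2} ∈ nhdsSet (diagonal I) :=
    nhdsSet_diagonal_eq_uniformity (α := I) ▸ Metric.dist_mem_uniformity (half_pos hε)
  obtain ⟨n, g, c, hg, hfg⟩ := f.exists_finite_approximation_of_mem_nhds_diagonal hS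
  have hg : IsLocallyConstant g := (IsLocallyConstant.iff_continuous g).2 hg
  obtain ⟨W, hW, hWν⟩ := exists_isClopen_apply_approx_sum hgood hdiv hfull hg c (half_pos hε)
  refine ⟨W, hW, fun ν hν => ?_⟩
  have happrox : |∑ i, c i * (ν (g ⁻¹' {i}) : ℝ) - ∫ x, (f x : ℝ) ∂(ν : Measure X)| ≤ ε / 2 := by
    have hcg : Integrable (fun x => (c (g x) : ℝ)) (ν : Measure X) :=
      BoundedContinuousFunction.integrable _
        (.mkOfCompact ⟨_, (hg.comp fun i => (c i : ℝ)).continuous⟩)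
    have hf : Integrable (fun x => (f x : ℝ)) (ν : Measure X) :=
      BoundedContinuousFunction.integrable _ (.mkOfCompact ⟨fun x => (f x : ℝ), by fun_prop⟩)
    rw [← integral_comp_eq_sum ν hg fun i => (c i : ℝ), ← integral_sub hcg hf, ← Real.norm_eq_abs]
    refine (norm_integral_le_of_norm_le_const (C := ε / 2) (.of_forall fun x => ?_)).trans_eq ?_
    · rw [norm_sub_rev]
      exact (hfg x).le
    · rw [probReal_univ, mul_one]
  calc |(ν W : ℝ) - ∫ x, (f x : ℝ) ∂(ν : Measure X)|
      ≤ ε / 2 + ε / 2 := (abs_sub_le _ _ _).trans (add_le_add (hWν ν hν) happrox)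
    _ = ε := add_halves ε

theorem equivHull_subset [CompactSpace X] [T2Space X] [TotallyDisconnectedSpace X]
    [HasOuterApproxClosed X] [BorelSpace X] (hne : K.Nonempty) (hcompact : IsCompact K)
    (hconv : ProbConvex K) (hfull : ∀ μ ∈ K, FullSupport μ) (hgood : Good K)
    (hdiv : ApproximatelyDivisible K) : equivHull K ⊆ K := by
  intro ν hν
  by_contra hνK
  obtain ⟨f, u, hfν, hfK⟩ := exists_unitInterval_integral_lt_of_notMem hcompact hconv hνK
  obtain ⟨c, hνc, hcu⟩ := exists_between hfν
  have hc : c ∈ I := by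
    obtain ⟨μ, hμ⟩ := hne
    have hfμ : ∫ x, (f x : ℝ) ∂(μ : Measure X) ≤ 1 :=
      (integral_mono_of_nonneg (.of_forall fun x => (f x).2.1) (integrable_const 1)
        (.of_forall fun x => (f x).2.2)).trans_eq (by simp)
    exact ⟨(integral_nonneg fun x => (f x).2.1).trans hνc.le, by linarith [hfK μ hμ]⟩
  obtain ⟨ε, hε, hεu, hεν⟩ : ∃ ε > 0, 2 * ε ≤ u - c ∧
      2 * ε < c - ∫ x, (f x : ℝ) ∂(ν : Measure X) := by
    obtain ⟨δ, hδ, hδlt⟩ := exists_between (lt_min (sub_pos.2 hcu) (sub_pos.2 hνc))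
    exact ⟨δ / 2, half_pos hδ, by linarith [min_le_left _ _ |>.trans' hδlt.le],
      by linarith [min_le_right _ _ |>.trans_lt' hδlt]⟩
  obtain ⟨E, -, hE, hEc⟩ := exists_isClopen_apply_approx_mul hgood hdiv hfull isClopen_univ hc hε
  obtain ⟨W, hW, hWf⟩ := exists_isClopen_apply_approx_integral hgood hdiv hfull f hε
  simp only [ProbabilityMeasure.coeFn_univ, NNReal.coe_one, mul_one, abs_le] at hEc hWf
  have hEW : ∀ μ ∈ K, μ E < μ W := fun μ hμ => by
    have hμE := (hEc μ (subset_equivHull K hμ)).2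
    have hμW := (hWf μ (subset_equivHull K hμ)).1
    exact NNReal.coe_lt_coe.1 (by linarith [hfK μ hμ])
  have hνEW : (ν E : ℝ) ≤ ν W :=
    NNReal.coe_le_coe.2 (apply_le_apply_of_mem_equivHull hgood hE hW hEW hν)
  linarith [(hEc ν hν).1, (hWf ν hν).2]

theorem mem_equivHull_of_forall_preserves [CompactSpace X] [T2Space X]
    [TotallyDisconnectedSpace X] [SecondCountableTopology X] [BorelSpace X] (hne : K.Nonempty)
    (hfull : ∀ μ ∈ K, FullSupport μ) (hgood : Good K) {ν : ProbabilityMeasure X}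
    (hν : ∀ h : X ≃ₜ X, PreservesAll K h → Preserves h ν) : ν ∈ equivHull K := by
  intro A B hA hB hAB
  obtain ⟨g, hg, rfl⟩ := exists_homeomorph_preservesAll_of_measure_eq hne hgood hfull hA hB hAB
  have hνB := congrArg (· B) (hν g hg)
  simp only [Measure.map_apply g.continuous.measurable hB.isOpen.measurableSet] at hνB
  exact congrArg ENNReal.toNNReal hνB

end EquivHull

end DynSimplex

theorem G_invariant_mem_of_dynamicalSimplex
    {X : Type*} [TopologicalSpace X] [CompactSpace X]
    [TopologicalSpace.MetrizableSpace X] [TotallyDisconnectedSpace X] [PerfectSpace X]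
    [Nonempty X] [MeasurableSpace X] [BorelSpace X]
    (K : Set (MeasureTheory.ProbabilityMeasure X)) (hK : DynSimplex.DynamicalSimplex K)
    (ν : MeasureTheory.ProbabilityMeasure X)
    (hν : ∀ h : X ≃ₜ X, DynSimplex.PreservesAll K h → DynSimplex.Preserves h ν) :
    ν ∈ K := by
  obtain ⟨hne, hcompact, hconv, hmeas, hgood, hdiv⟩ := hK
  have hfull : ∀ μ ∈ K, DynSimplex.FullSupport μ := fun μ hμ => (hmeas μ hμ).2
  let := TopologicalSpace.metrizableSpaceMetric X
  exact DynSimplex.equivHull_subset hne hcompact hconv hfull hgood hdiv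
    (DynSimplex.mem_equivHull_of_forall_preserves hne hfull hgood hν)
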